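/- arXiv:2112.13575 — 3 statements merged into one kernel-verified Lean document; each statement's English description precedes it below -/
import Mathlib

section
/- Let d ≥ 2, let ℓ : [0,∞)^d → [0,∞) be a stable tail dependence function with extreme value copula C and Pickands dependence function A, and let X = (X₁,…,X_d) be a random vector with continuous marginal distribution functions F₁,…,F_d such that P(X₁ ≤ x₁,…,X_d ≤ x_d) = C(F₁(x₁),…,F_d(x_d)). Then for every w in the unit simplex with all w_j > 0, the w-madogram satisfies ν(w) = A(w)/(1+A(w)) − c(w), where c(w) = (1/d)Σ_{j=1}^d w_j/(1+w_j); equivalently A(w) = (ν(w)+c(w))/(1−ν(w)−c(w)). -/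
open MeasureTheory ProbabilityTheory

/-!
The vector `U` of the `U_j = F_j(X_j)` has uniform margins and, on `(0, 1)^d`, joint distribution
function `C`. Homogeneity of `ℓ` gives `C(t ^ w_1, …, t ^ w_d) = t ^ ℓ(w)`, so the maximum of the
`U_j ^ (1 / w_j)` has distribution function `t ↦ t ^ ℓ(w)` on `(0, 1)`, while each `U_j ^ (1 / w_j)`
has distribution function `t ↦ t ^ w_j`. A `[0, 1]`-valued variable with distribution function
`t ↦ t ^ a` has mean `a / (1 + a)` by the layer-cake formula, and `ν(w)` is a linear combination of
such means.
-/

open Set Filter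

section PowerLaw

variable {Ω : Type*} [MeasurableSpace Ω] {μ : Measure Ω} {f : Ω → ℝ} {a b : ℝ}

/-- The random variable `f` has the distribution of a standard power variable with exponent `a`: it
takes values in `[0, 1]` and its distribution function is `t ↦ t ^ a` on `(0, 1)`. The exponent `1`
is the uniform distribution, and the exponent `0` the point mass at `0`. -/
structure HasPowerLaw (f : Ω → ℝ) (a : ℝ) (μ : Measure Ω) : Prop where
  aemeasurable : AEMeasurable f μ
  mem_Icc : ∀ᵐ ω ∂μ, f ω ∈ Icc 0 1
  measureReal_le : ∀ t ∈ Ioo (0 : ℝ) 1, μ.real {ω | f ω ≤ t} = t ^ a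

lemma HasPowerLaw.integrable [IsFiniteMeasure μ] (hf : HasPowerLaw f a μ) : Integrable f μ :=
  Integrable.of_mem_Icc 0 1 hf.aemeasurable hf.mem_Icc

lemma HasPowerLaw.exponent_nonneg [IsProbabilityMeasure μ] (hf : HasPowerLaw f a μ) : 0 ≤ a := by
  have hle : (1 / 2 : ℝ) ^ a ≤ 1 :=
    hf.measureReal_le (1 / 2) (by norm_num) ▸ measureReal_le_one
  by_contra! ha
  exact (Real.one_lt_rpow_of_pos_of_lt_one_of_neg (by norm_num) (by norm_num) ha).not_ge hle

lemma integral_eq_intervalIntegral_one_sub_measureReal_le [IsProbabilityMeasure μ] {M : ℝ}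
    (hM : 0 ≤ M) (hf : AEMeasurable f μ) (hfM : ∀ᵐ ω ∂μ, f ω ∈ Icc 0 M) :
    ∫ ω, f ω ∂μ = ∫ t in 0..M, (1 - μ.real {ω | f ω ≤ t}) := by
  rw [(Integrable.of_mem_Icc 0 M hf hfM).integral_eq_integral_Ioc_meas_le
    (hfM.mono fun _ h ↦ h.1) (hfM.mono fun _ h ↦ h.2), intervalIntegral.integral_of_le hM]
  refine integral_congr_ae ?_
  filter_upwards [meas_le_ae_eq_meas_lt μ (volume.restrict (Ioc 0 M)) f] with t ht
  rw [measureReal_def, ht, ← measureReal_def,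
    ← probReal_compl_eq_one_sub₀ (nullMeasurableSet_le hf aemeasurable_const)]
  simp only [compl_ofPred, not_le]

lemma integral_one_sub_rpow (ha : -1 < a) : ∫ t in 0..1, (1 - t ^ a) = a / (1 + a) := by
  have ha' : a + 1 ≠ 0 := by linarith
  rw [intervalIntegral.integral_sub intervalIntegrable_const
    (intervalIntegral.intervalIntegrable_rpow' ha), intervalIntegral.integral_const,
    integral_rpow (.inl ha), Real.one_rpow, Real.zero_rpow ha', add_comm 1 a]
  simp only [smul_eq_mul]
  field_simp
  ring

lemma HasPowerLaw.integral_eq [IsProbabilityMeasure μ] (hf : HasPowerLaw f a μ) :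
    ∫ ω, f ω ∂μ = a / (1 + a) := by
  rw [integral_eq_intervalIntegral_one_sub_measureReal_le zero_le_one hf.aemeasurable hf.mem_Icc,
    ← integral_one_sub_rpow (neg_one_lt_zero.trans_le hf.exponent_nonneg)]
  simp only [intervalIntegral.integral_of_le zero_le_one, integral_Ioc_eq_integral_Ioo]
  exact setIntegral_congr_fun measurableSet_Ioo fun t ht ↦ by rw [hf.measureReal_le t ht]

lemma rpow_mem_Icc {x : ℝ} (hx : x ∈ Icc (0 : ℝ) 1) (hb : 0 ≤ b) : x ^ b ∈ Icc (0 : ℝ) 1 :=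
  ⟨Real.rpow_nonneg hx.1 _, Real.rpow_le_one hx.1 hx.2 hb⟩

lemma rpow_mem_Ioo {t : ℝ} (ht : t ∈ Ioo (0 : ℝ) 1) (hb : 0 < b) : t ^ b ∈ Ioo (0 : ℝ) 1 :=
  ⟨Real.rpow_pos_of_pos ht.1 _, Real.rpow_lt_one ht.1.le ht.2 hb⟩

lemma HasPowerLaw.rpow_one_div (hf : HasPowerLaw f a μ) (hb : 0 < b) :
    HasPowerLaw (fun ω ↦ f ω ^ (1 / b)) (b * a) μ where
  aemeasurable := hf.aemeasurable.pow_const _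
  mem_Icc := hf.mem_Icc.mono fun _ h ↦ rpow_mem_Icc h (one_div_pos.2 hb).le
  measureReal_le t ht := by
    rw [Real.rpow_mul ht.1.le, ← hf.measureReal_le _ (rpow_mem_Ioo ht hb)]
    refine measureReal_congr (eventuallyEq_set.2 ?_)
    filter_upwards [hf.mem_Icc] with ω hω
    simp only [one_div, Real.rpow_inv_le_iff_of_pos hω.1 ht.1.le hb]

end PowerLaw

section Quantile

lemma exists_eq_and_preimage_Iic_eq_Iic {α β : Type*} [ConditionallyCompleteLinearOrder α]
    [TopologicalSpace α] [OrderTopology α] [DenselyOrdered α] [LinearOrder β] [TopologicalSpace β]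
    [OrderClosedTopology β] {G : α → β} {u : β} (hmono : Monotone G) (hcont : Continuous G)
    (hlo : ∃ p, G p ≤ u) (hhi : ∃ r, u < G r) :
    ∃ q, G q = u ∧ G ⁻¹' Iic u = Iic q := by
  obtain ⟨r, hr⟩ := hhi
  obtain ⟨z, rfl⟩ : u ∈ range G := mem_range_of_exists_le_of_exists_ge hcont hlo ⟨r, hr.le⟩
  have hbdd : BddAbove (G ⁻¹' Iic (G z)) :=
    ⟨r, fun y hy ↦ (hmono.reflect_lt (lt_of_le_of_lt hy hr)).le⟩
  have hle : G (sSup (G ⁻¹' Iic (G z))) ≤ G z :=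
    (isClosed_Iic.preimage hcont).csSup_mem ⟨z, le_rfl⟩ hbdd
  exact ⟨_, hle.antisymm (hmono (le_csSup hbdd le_rfl)),
    Subset.antisymm (fun _ hy ↦ le_csSup hbdd hy) fun _ hy ↦ (hmono hy).trans hle⟩

lemma exists_cdf_eq_and_preimage_Iic_eq_Iic {ρ : Measure ℝ} (hρ : Continuous (cdf ρ)) {u : ℝ}
    (hu : u ∈ Ioo (0 : ℝ) 1) : ∃ q, cdf ρ q = u ∧ cdf ρ ⁻¹' Iic u = Iic q :=
  exists_eq_and_preimage_Iic_eq_Iic (monotone_cdf ρ) hρ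
    (((tendsto_cdf_atBot ρ).eventually_le_const hu.1).exists)
    (((tendsto_cdf_atTop ρ).eventually_const_lt hu.2).exists)

variable {Ω : Type*} [MeasurableSpace Ω] {μ : Measure Ω}

lemma measureReal_forall_cdf_le {ι : Type*} {X : Ω → ι → ℝ} {C : (ι → ℝ) → ℝ}
    (hcont : ∀ j, Continuous (cdf (μ.map (X · j))))
    (hjoint : ∀ x : ι → ℝ, (∀ j, 0 < cdf (μ.map (X · j)) (x j)) →
      μ.real {ω | ∀ j, X ω j ≤ x j} = C fun j ↦ cdf (μ.map (X · j)) (x j))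
    {u : ι → ℝ} (hu : ∀ j, u j ∈ Ioo (0 : ℝ) 1) :
    μ.real {ω | ∀ j, cdf (μ.map (X · j)) (X ω j) ≤ u j} = C u := by
  choose q hq hIic using fun j ↦ exists_cdf_eq_and_preimage_Iic_eq_Iic (hcont j) (hu j)
  have hiff (j : ι) (y : ℝ) : cdf (μ.map (X · j)) y ≤ u j ↔ y ≤ q j := Set.ext_iff.1 (hIic j) y
  simp only [hiff]
  rw [hjoint q fun j ↦ (hq j).symm ▸ (hu j).1]
  simp only [hq]

variable [IsProbabilityMeasure μ]

lemma cdf_map_apply {Y : Ω → ℝ} (hY : AEMeasurable Y μ) (t : ℝ) :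
    cdf (μ.map Y) t = μ.real {ω | Y ω ≤ t} := by
  have := Measure.isProbabilityMeasure_map hY
  rw [cdf_eq_real, map_measureReal_apply_of_aemeasurable hY measurableSet_Iic]
  rfl

lemma hasPowerLaw_cdf_comp {Y : Ω → ℝ} (hY : AEMeasurable Y μ)
    (hcont : Continuous (cdf (μ.map Y))) :
    HasPowerLaw (fun ω ↦ cdf (μ.map Y) (Y ω)) 1 μ where
  aemeasurable := hcont.measurable.comp_aemeasurable hY
  mem_Icc := .of_forall fun _ ↦ ⟨cdf_nonneg _ _, cdf_le_one _ _⟩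
  measureReal_le u hu := by
    obtain ⟨q, hq, hIic⟩ := exists_cdf_eq_and_preimage_Iic_eq_Iic hcont hu
    have hset : {ω | cdf (μ.map Y) (Y ω) ≤ u} = {ω | Y ω ≤ q} := congrArg (Y ⁻¹' ·) hIic
    rw [hset, ← cdf_map_apply hY, hq, Real.rpow_one]

end Quantile

section Madogram

variable {ι : Type*}

/-- The extreme value copula `C(u) = exp (-ℓ (-log u))` associated with `ℓ`, for `u ∈ (0, 1] ^ ι`;
at other points its values carry no meaning. -/
noncomputable def extremeValueCopula (ℓ : (ι → ℝ) → ℝ) (u : ι → ℝ) : ℝ :=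
  Real.exp (-ℓ fun j ↦ -Real.log (u j))

lemma extremeValueCopula_rpow {ℓ : (ι → ℝ) → ℝ} {w : ι → ℝ}
    (hℓ : ∀ c : ℝ, 0 < c → ℓ (fun j ↦ c * w j) = c * ℓ w) {t : ℝ} (ht : t ∈ Ioo (0 : ℝ) 1) :
    extremeValueCopula ℓ (fun j ↦ t ^ w j) = t ^ ℓ w := by
  have hlog : (fun j ↦ -Real.log (t ^ w j)) = fun j ↦ -Real.log t * w j := by
    funext j
    rw [Real.log_rpow ht.1, mul_comm, neg_mul]
  rw [extremeValueCopula, hlog, hℓ _ (neg_pos.2 (Real.log_neg ht.1 ht.2)), neg_mul, neg_neg,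
    Real.rpow_def_of_pos ht.1]

variable {Ω : Type*} [MeasurableSpace Ω] {μ : Measure Ω}

lemma hasPowerLaw_iSup_rpow_one_div [Finite ι] [Nonempty ι] {U : Ω → ι → ℝ} {w : ι → ℝ} {a : ℝ}
    (hU : AEMeasurable U μ) (hU01 : ∀ j, ∀ᵐ ω ∂μ, U ω j ∈ Icc 0 1) (hw : ∀ j, 0 < w j)
    (hjoint : ∀ t ∈ Ioo (0 : ℝ) 1, μ.real {ω | ∀ j, U ω j ≤ t ^ w j} = t ^ a) :
    HasPowerLaw (fun ω ↦ ⨆ j, U ω j ^ (1 / w j)) a μ where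
  aemeasurable := .iSup fun j ↦ (aemeasurable_pi_iff.1 hU j).pow_const _
  mem_Icc := by
    filter_upwards [ae_all_iff.2 hU01] with ω hω
    have hmem (j : ι) := rpow_mem_Icc (hω j) (one_div_pos.2 (hw j)).le
    exact ⟨Real.iSup_nonneg fun j ↦ (hmem j).1, ciSup_le fun j ↦ (hmem j).2⟩
  measureReal_le t ht := by
    rw [← hjoint t ht]
    refine measureReal_congr (eventuallyEq_set.2 ?_)
    filter_upwards [ae_all_iff.2 hU01] with ω hω
    simp only [ciSup_le_iff (finite_range _).bddAbove, one_div,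
      Real.rpow_inv_le_iff_of_pos (hω _).1 ht.1.le (hw _)]

variable [Fintype ι]

/-- The `w`-madogram `ν(w)`, in terms of the vector `U` of the variables `U_j = F_j(X_j)`. -/
noncomputable def madogram (U : Ω → ι → ℝ) (w : ι → ℝ) (μ : Measure Ω) : ℝ :=
  ∫ ω, ((⨆ j, U ω j ^ (1 / w j)) - 1 / (Fintype.card ι : ℝ) * ∑ j, U ω j ^ (1 / w j)) ∂μ

/-- The constant `c(w)` of the madogram formula, the mean of `(1 / d) ∑ j, U_j ^ (1 / w_j)` for
uniform `U_j`. -/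
noncomputable def madogramShift (w : ι → ℝ) : ℝ :=
  1 / (Fintype.card ι : ℝ) * ∑ j, w j / (1 + w j)

variable [IsProbabilityMeasure μ]

lemma madogram_eq_sub {U : Ω → ι → ℝ} {w : ι → ℝ} {a : ℝ}
    (hsup : HasPowerLaw (fun ω ↦ ⨆ j, U ω j ^ (1 / w j)) a μ)
    (hmarg : ∀ j, HasPowerLaw (fun ω ↦ U ω j ^ (1 / w j)) (w j) μ) :
    madogram U w μ = a / (1 + a) - madogramShift w := by
  have hsum : Integrable (fun ω ↦ ∑ j, U ω j ^ (1 / w j)) μ :=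
    integrable_finsetSum _ fun j _ ↦ (hmarg j).integrable
  rw [madogram, integral_sub hsup.integrable (hsum.const_mul _), integral_const_mul,
    integral_finsetSum _ fun j _ ↦ (hmarg j).integrable, hsup.integral_eq, madogramShift]
  simp only [(hmarg _).integral_eq]

lemma div_one_add_div_one_sub_div_one_add {K : Type*} [Field K] {a : K} (ha : 1 + a ≠ 0) :
    a / (1 + a) / (1 - a / (1 + a)) = a := by
  rw [one_sub_div ha, add_sub_cancel_right, div_div_div_cancel_right₀ ha, div_one]

theorem stmt3_general [Nonempty ι] {ℓ : (ι → ℝ) → ℝ} {X : Ω → ι → ℝ} {F : ι → ℝ → ℝ} {w : ι → ℝ}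
    (hℓ : ∀ c : ℝ, 0 < c → ∀ x : ι → ℝ, (∀ j, 0 ≤ x j) → ℓ (fun j ↦ c * x j) = c * ℓ x)
    (hX : AEMeasurable X μ) (hF : ∀ j t, F j t = μ.real {ω | X ω j ≤ t})
    (hFcont : ∀ j, Continuous (F j))
    (hjoint : ∀ x : ι → ℝ, (∀ j, 0 < F j (x j)) →
      μ.real {ω | ∀ j, X ω j ≤ x j} = extremeValueCopula ℓ fun j ↦ F j (x j))
    (hw : ∀ j, 0 < w j) :
    madogram (fun ω j ↦ F j (X ω j)) w μ = ℓ w / (1 + ℓ w) - madogramShift w ∧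
      ℓ w = (madogram (fun ω j ↦ F j (X ω j)) w μ + madogramShift w) /
        (1 - madogram (fun ω j ↦ F j (X ω j)) w μ - madogramShift w) := by
  have hXj (j : ι) : AEMeasurable (X · j) μ := aemeasurable_pi_iff.1 hX j
  obtain rfl : F = fun j ↦ ⇑(cdf (μ.map (X · j))) :=
    funext₂ fun j t ↦ (hF j t).trans (cdf_map_apply (hXj j) t).symm
  have hU (j : ι) := hasPowerLaw_cdf_comp (hXj j) (hFcont j)
  have hsup : HasPowerLaw (fun ω ↦ ⨆ j, cdf (μ.map (X · j)) (X ω j) ^ (1 / w j)) (ℓ w) μ :=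
    hasPowerLaw_iSup_rpow_one_div (aemeasurable_pi_iff.2 fun j ↦ (hU j).aemeasurable)
      (fun j ↦ (hU j).mem_Icc) hw fun t ht ↦
        (measureReal_forall_cdf_le hFcont hjoint fun j ↦ rpow_mem_Ioo ht (hw j)).trans
          (extremeValueCopula_rpow (fun c hc ↦ hℓ c hc w fun j ↦ (hw j).le) ht)
  have hmarg (j : ι) :
      HasPowerLaw (fun ω ↦ cdf (μ.map (X · j)) (X ω j) ^ (1 / w j)) (w j) μ := by
    simpa only [mul_one] using (hU j).rpow_one_div (hw j)
  have hν := madogram_eq_sub hsup hmarg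
  refine ⟨hν, ?_⟩
  rw [sub_sub, hν, sub_add_cancel, div_one_add_div_one_sub_div_one_add]
  linarith [hsup.exponent_nonneg]

end Madogram

/-- For a random vector `X` whose distribution is an extreme value
copula `C` (with stable tail dependence function `ℓ` and Pickands dependence
function `A = ℓ` on the simplex) composed with continuous margins, and `w` in the
unit simplex with all `w j > 0`, the w-madogram satisfies
`ν(w) = A(w)/(1+A(w)) − c(w)`, equivalently `A(w) = (ν(w)+c(w))/(1−ν(w)−c(w))`. -/
theorem stmt3 (d : ℕ) (hd : 2 ≤ d) (ℓ : (Fin d → ℝ) → ℝ)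
    (hℓnonneg : ∀ x : Fin d → ℝ, (∀ j, 0 ≤ x j) → 0 ≤ ℓ x)
    (hℓcont : ContinuousOn ℓ {x | ∀ j, 0 ≤ x j})
    (hℓconv : ConvexOn ℝ {x | ∀ j, 0 ≤ x j} ℓ)
    (hℓhom : ∀ c : ℝ, 0 < c → ∀ x : Fin d → ℝ, (∀ j, 0 ≤ x j) →
      ℓ (fun j => c * x j) = c * ℓ x)
    (hℓbounds : ∀ x : Fin d → ℝ, (∀ j, 0 ≤ x j) →
      (∀ j, x j ≤ ℓ x) ∧ ℓ x ≤ ∑ j, x j)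
    (C : (Fin d → ℝ) → ℝ)
    (hC : ∀ u : Fin d → ℝ, (∀ j, 0 < u j ∧ u j ≤ 1) →
      C u = Real.exp (-ℓ (fun j => -Real.log (u j))))
    {Ω : Type*} [MeasureSpace Ω] [IsProbabilityMeasure (ℙ : Measure Ω)]
    (X : Ω → Fin d → ℝ) (hX : Measurable X)
    (F : Fin d → ℝ → ℝ)
    (hF : ∀ j t, F j t = ((ℙ : Measure Ω) {ω | X ω j ≤ t}).toReal)
    (hFcont : ∀ j, Continuous (F j))
    (hjoint : ∀ x : Fin d → ℝ, (∀ j, 0 < F j (x j)) →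
      ((ℙ : Measure Ω) {ω | ∀ j, X ω j ≤ x j}).toReal = C (fun j => F j (x j)))
    (w : Fin d → ℝ) (hw0 : ∀ j, 0 < w j) (hw1 : ∑ j, w j = 1)
    (ν c : ℝ)
    (hν : ν = ∫ ω, ((⨆ j, (F j (X ω j)) ^ (1 / w j))
      - (1/(d:ℝ)) * ∑ j, (F j (X ω j)) ^ (1 / w j)) ∂(ℙ : Measure Ω))
    (hc : c = (1/(d:ℝ)) * ∑ j, w j / (1 + w j)) :
    ν = ℓ w / (1 + ℓ w) - c ∧ ℓ w = (ν + c) / (1 - ν - c) := by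
  have : Nonempty (Fin d) := Fin.pos_iff_nonempty.1 (by omega)
  have key := stmt3_general hℓhom hX.aemeasurable hF hFcont
    (fun x hx ↦ (hjoint x hx).trans (hC _ fun j ↦ ⟨hx j, hF j _ ▸ measureReal_le_one⟩)) hw0
  rw [hν, hc]
  simpa only [madogram, madogramShift, Fintype.card_fin] using key
end

section
/- Let d ≥ 2, let C(u) = Π_{j=1}^d u_j be the independence copula, and fix w in the unit simplex with all w_j > 0. With the variance components defined as double integrals against C, one has: σ_{d+1}²(p,w) = (1/4)(1/(3p) − Σ_{j=1}^d p_j^{−1} w_j/(4−w_j)); σ_{jk}(w) = 0 for all j < k; and σ_{jk}^{(2)}(w) = 0 for all j ≠ k. -/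
/-!
If all coordinates other than `j ≠ k` equal `1`, the independence copula is the product of these
two coordinates, so the integrands of `σ_{jk}`, `σ_{jk}^{(2)}` and `τ_{jk}` vanish identically.
Since the weights sum to one, `Ċ_j(u^{w₁}, …, u^{w_d}) = u^{1 - w_j}`, and therefore `γ_j²` and
`γ_{1j}` have the same integrand `(u ∧ v) (u ∨ v)^{1 - a} - u v` on the open unit square, where
`a = w_j`; the integrand of `γ₁²` is the case `a = 1`. Its integral is
`1 / (4 - a) - 1 / 4 = a / (4 (4 - a))`. So in `σ_{d+1}²` the sums over `γ_j²` and `-2 γ_{1j}` leave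
minus one copy of `∑_j p_j⁻¹ γ_j²`, next to `p⁻¹ γ₁² = 1 / (12 p)`.
-/

open Set intervalIntegral

section Products

variable {ι : Type*} [DecidableEq ι]

theorem prod_ite_ite_eq_mul [Fintype ι] {M : Type*} [CommMonoid M] {j k : ι} (hjk : j ≠ k)
    (a b : M) : ∏ i, (if i = j then a else if i = k then b else 1) = a * b := by
  rw [Fintype.prod_eq_mul j k hjk fun i hi => by rw [if_neg hi.1, if_neg hi.2],
    if_pos rfl, if_neg hjk.symm, if_pos rfl]

theorem prod_erase_rpow {s : Finset ι} {j : ι} (hj : j ∈ s) (w : ι → ℝ) {u : ℝ} (hu : 0 < u) :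
    ∏ i ∈ s.erase j, u ^ w i = u ^ (∑ i ∈ s, w i - w j) := by
  rw [← Real.rpow_sum_of_pos hu, Finset.sum_erase_eq_sub hj]

end Products

theorem integral_integral_congr_Ioo {E : Type*} [NormedAddCommGroup E] [NormedSpace ℝ E]
    {a b c d : ℝ} (hab : a ≤ b) (hcd : c ≤ d) {f g : ℝ → ℝ → E}
    (h : ∀ u ∈ Ioo a b, ∀ v ∈ Ioo c d, f u v = g u v) :
    ∫ u in a..b, ∫ v in c..d, f u v = ∫ u in a..b, ∫ v in c..d, g u v :=
  integral_congr_Ioo_of_le hab fun u hu => integral_congr_Ioo_of_le hcd (h u hu)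

/-- The common integrand of `γ_j²` and `γ_{1j}` for the independence copula, with `a = w_j`. For
`a = 1` it is the integrand of `γ₁²`, the covariance function of the Brownian bridge. -/
noncomputable def bridgeKernel (a u v : ℝ) : ℝ :=
  min u v * max u v ^ (1 - a) - u * v

section BridgeKernel

variable {a u v : ℝ}

theorem bridgeKernel_one (u v : ℝ) : bridgeKernel 1 u v = min u v - u * v := by
  simp [bridgeKernel]

theorem bridgeKernel_of_ge (h : v ≤ u) : bridgeKernel a u v = (u ^ (1 - a) - u) * v := by
  rw [bridgeKernel, min_eq_right h, max_eq_left h]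
  ring

theorem bridgeKernel_of_le (h : u ≤ v) : bridgeKernel a u v = u * (v ^ (1 - a) - v) := by
  rw [bridgeKernel, min_eq_left h, max_eq_right h]
  ring

theorem continuous_bridgeKernel (a : ℝ) (hu : 0 < u) : Continuous (bridgeKernel a u) := by
  have hmax : Continuous fun v => max u v ^ (1 - a) :=
    (continuous_const.max continuous_id).rpow_const fun v => .inl (lt_max_of_lt_left hu).ne'
  unfold bridgeKernel
  fun_prop

theorem rpow_mul_rpow_one_sub (a : ℝ) (hu : 0 < u) : u ^ a * u ^ (1 - a) = u := by
  rw [← Real.rpow_add hu, add_sub_cancel, Real.rpow_one]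

theorem min_rpow_mul_rpow_one_sub (a : ℝ) (hu : 0 < u) (hv : 0 < v) :
    min u v ^ a * u ^ (1 - a) * v ^ (1 - a) = min u v * max u v ^ (1 - a) := by
  rcases le_total u v with h | h
  · rw [min_eq_left h, max_eq_right h, rpow_mul_rpow_one_sub a hu]
  · rw [min_eq_right h, max_eq_left h, mul_right_comm, rpow_mul_rpow_one_sub a hv]

theorem min_rpow_sub_mul_rpow_one_sub (a : ℝ) (hu : 0 < u) (hv : 0 < v) :
    (min u v ^ a - u ^ a * v ^ a) * u ^ (1 - a) * v ^ (1 - a) = bridgeKernel a u v :=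
  calc (min u v ^ a - u ^ a * v ^ a) * u ^ (1 - a) * v ^ (1 - a)
      = min u v ^ a * u ^ (1 - a) * v ^ (1 - a)
          - (u ^ a * u ^ (1 - a)) * (v ^ a * v ^ (1 - a)) := by ring
    _ = bridgeKernel a u v := by
      rw [min_rpow_mul_rpow_one_sub a hu hv, rpow_mul_rpow_one_sub a hu,
        rpow_mul_rpow_one_sub a hv, bridgeKernel]

theorem min_rpow_mul_sub_mul_rpow_one_sub (a : ℝ) (hu : 0 < u) (hv : 0 < v) :
    (min u v ^ a * u ^ (1 - a) - u * v ^ a) * v ^ (1 - a) = bridgeKernel a u v := by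
  rw [sub_mul, mul_assoc u, min_rpow_mul_rpow_one_sub a hu hv, rpow_mul_rpow_one_sub a hv,
    bridgeKernel]

theorem integral_bridgeKernel_zero_self (a : ℝ) (hu : 0 ≤ u) :
    ∫ v in (0 : ℝ)..u, bridgeKernel a u v = (u ^ (1 - a) - u) * (u ^ 2 / 2) := by
  rw [integral_congr_Ioo_of_le hu fun v hv => bridgeKernel_of_ge hv.2.le, integral_const_mul,
    integral_id, zero_pow two_ne_zero, sub_zero]

theorem integral_bridgeKernel_self_one (ha : a < 2) (hu : u ≤ 1) :
    ∫ v in u..1, bridgeKernel a u v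
      = u * ((1 - u ^ (2 - a)) / (2 - a) - (1 - u ^ 2) / 2) := by
  rw [integral_congr_Ioo_of_le hu fun v hv => bridgeKernel_of_le hv.1.le, integral_const_mul,
    integral_sub (intervalIntegrable_rpow' (by linarith)) intervalIntegrable_id,
    integral_rpow (.inl (by linarith)), integral_id, Real.one_rpow, one_pow,
    show 1 - a + 1 = 2 - a by ring]

theorem integral_bridgeKernel (ha : a < 2) (hu : u ∈ Ioc 0 1) :
    ∫ v in (0 : ℝ)..1, bridgeKernel a u v
      = (1 / (2 - a) - 1 / 2) * (u - u ^ (3 - a)) := by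
  have hcont := continuous_bridgeKernel a hu.1
  have hpow₂ : u ^ (2 - a) = u ^ (1 - a) * u := by
    rw [← Real.rpow_add_one hu.1.ne']
    ring_nf
  have hpow₃ : u ^ (3 - a) = u ^ (1 - a) * u ^ 2 := by
    rw [← Real.rpow_add_natCast hu.1.ne']
    push_cast
    ring_nf
  rw [← integral_add_adjacent_intervals (hcont.intervalIntegrable 0 u)
    (hcont.intervalIntegrable u 1), integral_bridgeKernel_zero_self a hu.1.le,
    integral_bridgeKernel_self_one ha hu.2, hpow₂, hpow₃]
  ring

theorem integral_integral_bridgeKernel (ha : a < 2) :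
    ∫ u in (0 : ℝ)..1, ∫ v in (0 : ℝ)..1, bridgeKernel a u v = 1 / 4 * (a / (4 - a)) := by
  have h₂ : 2 - a ≠ 0 := by linarith
  have h₄ : 4 - a ≠ 0 := by linarith
  calc ∫ u in (0 : ℝ)..1, ∫ v in (0 : ℝ)..1, bridgeKernel a u v
      = ∫ u in (0 : ℝ)..1, (1 / (2 - a) - 1 / 2) * (u - u ^ (3 - a)) :=
        integral_congr_Ioo_of_le zero_le_one fun u hu =>
          integral_bridgeKernel ha ⟨hu.1, hu.2.le⟩
    _ = (1 / (2 - a) - 1 / 2) * (1 / 2 - 1 / (4 - a)) := by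
      rw [integral_const_mul,
        integral_sub intervalIntegrable_id (intervalIntegrable_rpow' (by linarith)),
        integral_id, integral_rpow (.inl (by linarith)), show 3 - a + 1 = 4 - a by ring,
        Real.one_rpow, Real.zero_rpow h₄]
      norm_num
    _ = 1 / 4 * (a / (4 - a)) := by
      field_simp
      ring

theorem integral_integral_min_sub_mul :
    ∫ u in (0 : ℝ)..1, ∫ v in (0 : ℝ)..1, (min u v - u * v) = 1 / 12 := by
  simp only [← bridgeKernel_one]
  rw [integral_integral_bridgeKernel one_lt_two]
  norm_num

end BridgeKernel

section VarianceComponents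

variable {ι : Type*} [Fintype ι] [DecidableEq ι] {w : ι → ℝ} {j : ι}

theorem integral_integral_min_rpow_sub_mul_prod_erase (hw : ∑ i, w i = 1) (hj : w j < 2) :
    ∫ u in (0 : ℝ)..1, ∫ v in (0 : ℝ)..1, (min u v ^ w j - u ^ w j * v ^ w j)
        * (∏ i ∈ Finset.univ.erase j, u ^ w i) * ∏ i ∈ Finset.univ.erase j, v ^ w i
      = 1 / 4 * (w j / (4 - w j)) := by
  rw [← integral_integral_bridgeKernel hj]
  refine integral_integral_congr_Ioo zero_le_one zero_le_one fun u hu v hv => ?_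
  rw [prod_erase_rpow (Finset.mem_univ j) w hu.1, prod_erase_rpow (Finset.mem_univ j) w hv.1, hw,
    min_rpow_sub_mul_rpow_one_sub (w j) hu.1 hv.1]

theorem integral_integral_prod_update_sub_mul_prod_erase (hw : ∑ i, w i = 1) (hj : w j < 2) :
    ∫ u in (0 : ℝ)..1, ∫ v in (0 : ℝ)..1,
        (∏ i, Function.update (fun i => u ^ w i) j (min u v ^ w j) i - u * v ^ w j)
          * ∏ i ∈ Finset.univ.erase j, v ^ w i
      = 1 / 4 * (w j / (4 - w j)) := by
  rw [← integral_integral_bridgeKernel hj]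
  refine integral_integral_congr_Ioo zero_le_one zero_le_one fun u hu v hv => ?_
  rw [Finset.prod_update_of_mem (Finset.mem_univ j), Finset.sdiff_singleton_eq_erase,
    prod_erase_rpow (Finset.mem_univ j) w hu.1, prod_erase_rpow (Finset.mem_univ j) w hv.1, hw,
    min_rpow_mul_sub_mul_rpow_one_sub (w j) hu.1 hv.1]

end VarianceComponents

theorem stmt10_general (d : ℕ)
    (C : (Fin d → ℝ) → ℝ) (hC : ∀ u : Fin d → ℝ, C u = ∏ j, u j)
    (Cdot : Fin d → (Fin d → ℝ) → ℝ)
    (hCdot : ∀ (j : Fin d) (u : Fin d → ℝ), Cdot j u = ∏ k ∈ Finset.univ.erase j, u k)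
    (w : Fin d → ℝ) (hw_lt : ∀ j, w j < 2) (hw1 : ∑ j, w j = 1)
    (p : ℝ) (hp : p ≠ 0)
    (pj : Fin d → ℝ) (hpj : ∀ j, pj j ≠ 0)
    (pjk : Fin d → Fin d → ℝ)
    (σjk : Fin d → Fin d → ℝ)
    (hσjk : ∀ j k, σjk j k = ∫ u in (0:ℝ)..1, ∫ v in (0:ℝ)..1,
      (C (fun i => if i = j then u ^ w j else if i = k then v ^ w k else 1)
        - u ^ w j * v ^ w k))
    (σ2 : Fin d → Fin d → ℝ)
    (hσ2 : ∀ j k, j ≠ k → σ2 j k = ∫ u in (0:ℝ)..1, ∫ v in (0:ℝ)..1,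
      (C (fun i => if i = j then u ^ w j else if i = k then v ^ w k else 1)
        - u ^ w j * v ^ w k) * Cdot k (fun i => v ^ w i))
    (γ1sq : ℝ)
    (hγ1sq : γ1sq = ∫ u in (0:ℝ)..1, ∫ v in (0:ℝ)..1,
      ((min u v) ^ (1:ℝ) - u ^ (1:ℝ) * v ^ (1:ℝ)))
    (γsq : Fin d → ℝ)
    (hγsq : ∀ j, γsq j = ∫ u in (0:ℝ)..1, ∫ v in (0:ℝ)..1,
      ((min u v) ^ w j - u ^ w j * v ^ w j)
        * Cdot j (fun i => u ^ w i) * Cdot j (fun i => v ^ w i))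
    (γ1 : Fin d → ℝ)
    (hγ1 : ∀ j, γ1 j = ∫ u in (0:ℝ)..1, ∫ v in (0:ℝ)..1,
      (C (Function.update (fun i => u ^ w i) j ((min u v) ^ w j))
        - u ^ (1:ℝ) * v ^ w j) * Cdot j (fun i => v ^ w i))
    (τ : Fin d → Fin d → ℝ)
    (hτ : ∀ j k, τ j k = ∫ u in (0:ℝ)..1, ∫ v in (0:ℝ)..1,
      (C (fun i => if i = j then u ^ w j else if i = k then v ^ w k else 1)
        - u ^ w j * v ^ w k)
        * Cdot j (fun i => u ^ w i) * Cdot k (fun i => v ^ w i))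
    (σd1 : ℝ)
    (hσd1 : σd1 = p⁻¹ * γ1sq + ∑ j, (pj j)⁻¹ * γsq j - 2 * ∑ j, (pj j)⁻¹ * γ1 j
      + 2 * ∑ j, ∑ k, (if j < k then (pjk j k / (pj j * pj k)) * τ j k else 0)) :
    σd1 = (1/4) * (1/(3*p) - ∑ j, (pj j)⁻¹ * (w j / (4 - w j))) ∧
    (∀ j k : Fin d, j < k → σjk j k = 0) ∧
    (∀ j k : Fin d, j ≠ k → σ2 j k = 0) := by
  have hpair : ∀ j k, j ≠ k → ∀ a b : ℝ,
      C (fun i => if i = j then a else if i = k then b else 1) - a * b = 0 := fun j k hjk a b => by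
    rw [hC, prod_ite_ite_eq_mul hjk, sub_self]
  have hτ_zero : ∀ j k, j ≠ k → τ j k = 0 := fun j k hjk => by
    simp only [hτ, hpair j k hjk, zero_mul, integral_zero]
  have hγ1sq_eq : γ1sq = 1 / 12 := by
    simpa only [hγ1sq, Real.rpow_one] using integral_integral_min_sub_mul
  have hγsq_eq : ∀ j, γsq j = 1 / 4 * (w j / (4 - w j)) := fun j => by
    simpa only [hγsq, hCdot] using integral_integral_min_rpow_sub_mul_prod_erase hw1 (hw_lt j)
  have hγ1_eq : ∀ j, γ1 j = γsq j := fun j => by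
    rw [hγsq_eq]
    simpa only [hγ1, hC, hCdot, Real.rpow_one] using
      integral_integral_prod_update_sub_mul_prod_erase hw1 (hw_lt j)
  have hτ_sum : ∑ j, ∑ k, (if j < k then (pjk j k / (pj j * pj k)) * τ j k else 0) = 0 :=
    Finset.sum_eq_zero fun j _ => Finset.sum_eq_zero fun k _ =>
      ite_eq_right_iff.mpr fun hjk => by rw [hτ_zero j k hjk.ne, mul_zero]
  have hγ_sum : ∑ j, (pj j)⁻¹ * γsq j = 1 / 4 * ∑ j, (pj j)⁻¹ * (w j / (4 - w j)) := by
    simp only [hγsq_eq, Finset.mul_sum, mul_left_comm]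
  refine ⟨?_, fun j k hjk => ?_, fun j k hjk => ?_⟩
  · simp only [hσd1, hτ_sum, hγ1sq_eq, hγ1_eq, hγ_sum]
    field_simp
    ring
  · simp only [hσjk, hpair j k hjk.ne, integral_zero]
  · simp only [hσ2 j k hjk, hpair j k hjk, zero_mul, integral_zero]

/-- For the independence copula `C(u) = Π_j u_j` (with
`Ċ_j(u) = Π_{k≠j} u_k` and `A(w) = 1`) and `w` in the unit simplex with all
`w_j > 0`, the variance components satisfy
`σ_{d+1}²(p,w) = (1/4)(1/(3p) − Σ_j p_j⁻¹ w_j/(4−w_j))`, `σ_{jk}(w) = 0` for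
`j < k`, and `σ_{jk}^{(2)}(w) = 0` for `j ≠ k`. -/
theorem stmt10 (d : ℕ) (hd : 2 ≤ d)
    (C : (Fin d → ℝ) → ℝ) (hC : ∀ u : Fin d → ℝ, C u = ∏ j, u j)
    (Cdot : Fin d → (Fin d → ℝ) → ℝ)
    (hCdot : ∀ (j : Fin d) (u : Fin d → ℝ), Cdot j u = ∏ k ∈ Finset.univ.erase j, u k)
    (w : Fin d → ℝ) (hw0 : ∀ j, 0 < w j) (hw1 : ∑ j, w j = 1)
    (p : ℝ) (hp : 0 < p) (hp1 : p ≤ 1)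
    (pj : Fin d → ℝ) (hpj : ∀ j, 0 < pj j) (hpj1 : ∀ j, pj j ≤ 1)
    (pjk : Fin d → Fin d → ℝ) (hpjk : ∀ j k, 0 < pjk j k)
    (σjk : Fin d → Fin d → ℝ)
    (hσjk : ∀ j k, σjk j k = ∫ u in (0:ℝ)..1, ∫ v in (0:ℝ)..1,
      (C (fun i => if i = j then u ^ w j else if i = k then v ^ w k else 1)
        - u ^ w j * v ^ w k))
    (σ2 : Fin d → Fin d → ℝ)
    (hσ2 : ∀ j k, j ≠ k → σ2 j k = ∫ u in (0:ℝ)..1, ∫ v in (0:ℝ)..1,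
      (C (fun i => if i = j then u ^ w j else if i = k then v ^ w k else 1)
        - u ^ w j * v ^ w k) * Cdot k (fun i => v ^ w i))
    (γ1sq : ℝ)
    (hγ1sq : γ1sq = ∫ u in (0:ℝ)..1, ∫ v in (0:ℝ)..1,
      ((min u v) ^ (1:ℝ) - u ^ (1:ℝ) * v ^ (1:ℝ)))
    (γsq : Fin d → ℝ)
    (hγsq : ∀ j, γsq j = ∫ u in (0:ℝ)..1, ∫ v in (0:ℝ)..1,
      ((min u v) ^ w j - u ^ w j * v ^ w j)
        * Cdot j (fun i => u ^ w i) * Cdot j (fun i => v ^ w i))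
    (γ1 : Fin d → ℝ)
    (hγ1 : ∀ j, γ1 j = ∫ u in (0:ℝ)..1, ∫ v in (0:ℝ)..1,
      (C (Function.update (fun i => u ^ w i) j ((min u v) ^ w j))
        - u ^ (1:ℝ) * v ^ w j) * Cdot j (fun i => v ^ w i))
    (τ : Fin d → Fin d → ℝ)
    (hτ : ∀ j k, τ j k = ∫ u in (0:ℝ)..1, ∫ v in (0:ℝ)..1,
      (C (fun i => if i = j then u ^ w j else if i = k then v ^ w k else 1)
        - u ^ w j * v ^ w k)
        * Cdot j (fun i => u ^ w i) * Cdot k (fun i => v ^ w i))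
    (σd1 : ℝ)
    (hσd1 : σd1 = p⁻¹ * γ1sq + ∑ j, (pj j)⁻¹ * γsq j - 2 * ∑ j, (pj j)⁻¹ * γ1 j
      + 2 * ∑ j, ∑ k, (if j < k then (pjk j k / (pj j * pj k)) * τ j k else 0)) :
    σd1 = (1/4) * (1/(3*p) - ∑ j, (pj j)⁻¹ * (w j / (4 - w j))) ∧
    (∀ j k : Fin d, j < k → σjk j k = 0) ∧
    (∀ j k : Fin d, j ≠ k → σ2 j k = 0) := by
  have hw_le : ∀ j, w j ≤ 1 := fun j =>
    hw1 ▸ Finset.single_le_sum (fun i _ => (hw0 i).le) (Finset.mem_univ j)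
  exact stmt10_general d C hC Cdot hCdot w (fun j => (hw_le j).trans_lt one_lt_two) hw1 p hp.ne'
    pj (fun j => (hpj j).ne') pjk σjk hσjk σ2 hσ2 γ1sq hγ1sq γsq hγsq γ1 hγ1 τ hτ σd1 hσd1
end

section
/- Let ℓ₂ : [0,∞)² → [0,∞) be continuous, homogeneous of order one (ℓ₂(c·x, c·y) = c·ℓ₂(x,y) for c > 0) and satisfy max(x,y) ≤ ℓ₂(x,y) ≤ x + y, and let p, q > 0. Then ∫₀¹∫₀¹ exp(−ℓ₂(−ln x, −ln y)) x^{p−1} y^{q−1} dx dy = ∫₀¹ [ℓ₂(1−s, s) + (1−s)(p−1) + s(q−1) + 1]^{−2} ds. -/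
/-!
Put `L u v = ℓ₂(u, v) + p u + q v`, which is again homogeneous of order one. The substitution
`x = exp (-u)`, `y = exp (-v)` turns the left-hand side into the integral of `exp (-L u v)` over the
open quadrant. In the coordinates `u = r (1 - s)`, `v = r s`, whose Jacobian is `r`, homogeneity
makes the integrand `r exp (-L (1 - s) s r)`, and integrating over `r` leaves `L (1 - s) s ^ (-2)`.
-/

open MeasureTheory Set Real

section ChangeOfVariables

variable {E : Type*} [NormedAddCommGroup E] [NormedSpace ℝ E]

theorem integral_comp_exp_neg_Ioi (g : ℝ → E) (a : ℝ) :
    ∫ u in Ioi a, exp (-u) • g (exp (-u)) = ∫ x in Ioo 0 (exp (-a)), g x := by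
  rw [integral_comp_neg_Ioi a fun t => exp t • g (exp t), integral_Iic_eq_integral_Iio,
    ← image_exp_Iio, integral_image_eq_integral_abs_deriv_smul measurableSet_Iio
      (fun t _ => (hasDerivAt_exp t).hasDerivWithinAt) exp_injective.injOn]
  simp only [abs_exp]

/-- Polar coordinates `(s, r) ↦ (r (1 - s), r s)` of the open quadrant with respect to the norm
`|u| + |v|`: the radius is `r = u + v` and the angle is the share `s = v / (u + v)`. -/
def simplexPolar (z : ℝ × ℝ) : ℝ × ℝ :=
  (z.2 * (1 - z.1), z.2 * z.1)

/-- The derivative of `simplexPolar`, see `hasFDerivAt_simplexPolar`. -/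
noncomputable def fderivSimplexPolar (z : ℝ × ℝ) : ℝ × ℝ →L[ℝ] ℝ × ℝ :=
  (Matrix.toLin (.finTwoProd ℝ) (.finTwoProd ℝ)
    !![-z.2, 1 - z.1; z.2, z.1]).toContinuousLinearMap

theorem hasFDerivAt_simplexPolar (z : ℝ × ℝ) :
    HasFDerivAt simplexPolar (fderivSimplexPolar z) z := by
  unfold fderivSimplexPolar
  rw [Matrix.toLin_finTwoProd_toContinuousLinearMap]
  have hfst : HasFDerivAt Prod.fst (ContinuousLinearMap.fst ℝ ℝ ℝ) z := hasFDerivAt_fst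
  have hsnd : HasFDerivAt Prod.snd (ContinuousLinearMap.snd ℝ ℝ ℝ) z := hasFDerivAt_snd
  refine ((hsnd.mul (hfst.const_sub 1)).prodMk (hsnd.mul hfst)).congr_fderiv ?_
  ext <;> simp

theorem det_fderivSimplexPolar (z : ℝ × ℝ) : (fderivSimplexPolar z).det = -z.2 := by
  unfold fderivSimplexPolar
  simp only [LinearMap.det_toContinuousLinearMap, LinearMap.det_toLin, Matrix.det_fin_two_of]
  ring

theorem bijOn_simplexPolar : BijOn simplexPolar (Ioo 0 1 ×ˢ Ioi 0) (Ioi 0 ×ˢ Ioi 0) := by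
  have hinv : InvOn (fun w : ℝ × ℝ => (w.2 / (w.1 + w.2), w.1 + w.2)) simplexPolar
      (Ioo 0 1 ×ˢ Ioi 0) (Ioi 0 ×ˢ Ioi 0) := by
    constructor
    · rintro ⟨s, r⟩ ⟨-, hr : 0 < r⟩
      ext <;> simp only [simplexPolar] <;> field
    · rintro ⟨u, v⟩ ⟨hu : 0 < u, hv : 0 < v⟩
      ext <;> simp only [simplexPolar] <;> field
  refine hinv.bijOn ?_ ?_
  · rintro ⟨s, r⟩ ⟨⟨hs₀, hs₁⟩, hr⟩
    exact ⟨mul_pos hr (sub_pos.2 hs₁), mul_pos hr hs₀⟩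
  · rintro ⟨u, v⟩ ⟨hu : 0 < u, hv : 0 < v⟩
    exact ⟨⟨by positivity, (div_lt_one (by positivity)).2 (by simpa using hu)⟩, add_pos hu hv⟩

theorem abs_det_fderivSimplexPolar_smul_eqOn (f : ℝ × ℝ → E) :
    EqOn (fun z => |(fderivSimplexPolar z).det| • f (simplexPolar z))
      (fun z => z.2 • f (simplexPolar z)) (Ioo 0 1 ×ˢ Ioi 0) := by
  rintro z ⟨-, hr : 0 < z.2⟩
  simp only [det_fderivSimplexPolar, abs_neg, abs_of_pos hr]

theorem integral_comp_simplexPolar (f : ℝ × ℝ → E) :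
    ∫ z in Ioo 0 1 ×ˢ Ioi 0, z.2 • f (simplexPolar z) = ∫ w in Ioi 0 ×ˢ Ioi 0, f w := by
  have hs : MeasurableSet (Ioo (0 : ℝ) 1 ×ˢ Ioi (0 : ℝ)) := measurableSet_Ioo.prod measurableSet_Ioi
  rw [← bijOn_simplexPolar.image_eq, integral_image_eq_integral_abs_det_fderiv_smul volume hs
    (fun z _ => (hasFDerivAt_simplexPolar z).hasFDerivWithinAt) bijOn_simplexPolar.injOn]
  exact (setIntegral_congr_fun hs (abs_det_fderivSimplexPolar_smul_eqOn f)).symm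

theorem integrableOn_comp_simplexPolar (f : ℝ × ℝ → E) :
    IntegrableOn (fun z => z.2 • f (simplexPolar z)) (Ioo 0 1 ×ˢ Ioi 0) ↔
      IntegrableOn f (Ioi 0 ×ˢ Ioi 0) := by
  have hs : MeasurableSet (Ioo (0 : ℝ) 1 ×ˢ Ioi (0 : ℝ)) := measurableSet_Ioo.prod measurableSet_Ioi
  rw [← bijOn_simplexPolar.image_eq, integrableOn_image_iff_integrableOn_abs_det_fderiv_smul volume
    hs (fun z _ => (hasFDerivAt_simplexPolar z).hasFDerivWithinAt) bijOn_simplexPolar.injOn]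
  exact (integrableOn_congr_fun (abs_det_fderivSimplexPolar_smul_eqOn f) hs).symm

end ChangeOfVariables

section RadialIntegral

theorem integral_mul_exp_neg_mul_Ioi {a : ℝ} (ha : 0 < a) :
    ∫ r in Ioi 0, r * exp (-(a * r)) = (a ^ 2)⁻¹ := by
  have h := integral_rpow_mul_exp_neg_mul_Ioi two_pos ha
  simpa only [show (2 : ℝ) - 1 = 1 by norm_num, rpow_one, Gamma_two, mul_one, one_div, rpow_two,
    inv_pow] using h

theorem integrableOn_mul_exp_neg_mul_Ioi {a : ℝ} (ha : 0 < a) :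
    IntegrableOn (fun r => r * exp (-(a * r))) (Ioi 0) :=
  .of_integral_ne_zero <| by rw [integral_mul_exp_neg_mul_Ioi ha]; positivity

variable {α : Type*} [MeasurableSpace α] {μ : Measure α} {a : α → ℝ}

theorem aemeasurable_of_inv_sq (ha : ∀ᵐ s ∂μ, 0 ≤ a s)
    (hmeas : AEMeasurable (fun s => (a s ^ 2)⁻¹) μ) : AEMeasurable a μ := by
  refine hmeas.sqrt.inv.congr ?_
  filter_upwards [ha] with s hs
  simp only [Pi.inv_apply, sqrt_inv, inv_inv, sqrt_sq hs]

theorem integrable_prod_mul_exp_neg_mul (ha : ∀ᵐ s ∂μ, 0 < a s)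
    (hint : Integrable (fun s => (a s ^ 2)⁻¹) μ) :
    Integrable (fun z : α × ℝ => z.2 * exp (-(a z.1 * z.2)))
      (μ.prod (volume.restrict (Ioi 0))) := by
  have hmeas : AEMeasurable (fun z : α × ℝ => a z.1) (μ.prod (volume.restrict (Ioi 0))) :=
    (aemeasurable_of_inv_sq (ha.mono fun _ => le_of_lt) hint.aemeasurable).comp_fst
  have hkernel : AEMeasurable (fun z : α × ℝ => z.2 * exp (-(a z.1 * z.2)))
      (μ.prod (volume.restrict (Ioi 0))) :=
    measurable_snd.aemeasurable.mul (hmeas.mul measurable_snd.aemeasurable).neg.exp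
  refine (integrable_prod_iff hkernel.aestronglyMeasurable).2 ⟨?_, hint.congr ?_⟩
  · filter_upwards [ha] with s hs using integrableOn_mul_exp_neg_mul_Ioi hs
  · filter_upwards [ha] with s hs
    rw [← integral_mul_exp_neg_mul_Ioi hs]
    refine setIntegral_congr_fun measurableSet_Ioi fun r (hr : 0 < r) => ?_
    exact (norm_of_nonneg (by positivity)).symm

end RadialIntegral

theorem integrableOn_Icc_inv_sq {f : ℝ → ℝ} {a b : ℝ} (hf : ContinuousOn f (Icc a b))
    (hne : ∀ s ∈ Icc a b, f s ≠ 0) : IntegrableOn (fun s => (f s ^ 2)⁻¹) (Icc a b) :=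
  ((hf.pow 2).inv₀ fun s hs => pow_ne_zero 2 (hne s hs)).integrableOn_Icc

theorem integral_exp_neg_of_homogeneous {L : ℝ → ℝ → ℝ}
    (hhom : ∀ c, 0 < c → ∀ u v, 0 < u → 0 < v → L (c * u) (c * v) = c * L u v)
    (hpos : ∀ s ∈ Ioo (0 : ℝ) 1, 0 < L (1 - s) s)
    (hint : IntegrableOn (fun s => (L (1 - s) s ^ 2)⁻¹) (Ioo 0 1)) :
    ∫ u in Ioi 0, ∫ v in Ioi 0, exp (-L u v) = ∫ s in Ioo 0 1, (L (1 - s) s ^ 2)⁻¹ := by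
  let f : ℝ × ℝ → ℝ := fun w => exp (-L w.1 w.2)
  have hmeas : MeasurableSet (Ioo (0 : ℝ) 1 ×ˢ Ioi (0 : ℝ)) :=
    measurableSet_Ioo.prod measurableSet_Ioi
  have hpolar : EqOn (fun z => z.2 • f (simplexPolar z))
      (fun z => z.2 * exp (-(L (1 - z.1) z.1 * z.2))) (Ioo 0 1 ×ˢ Ioi 0) := by
    rintro ⟨s, r⟩ ⟨⟨hs₀, hs₁⟩, hr⟩
    simp only [f, simplexPolar, smul_eq_mul, hhom r hr _ _ (sub_pos.2 hs₁) hs₀, mul_comm r (L _ _)]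
  have hradial : IntegrableOn (fun z : ℝ × ℝ => z.2 * exp (-(L (1 - z.1) z.1 * z.2)))
      (Ioo 0 1 ×ˢ Ioi 0) := by
    rw [IntegrableOn, Measure.volume_eq_prod, ← Measure.prod_restrict]
    exact integrable_prod_mul_exp_neg_mul (ae_restrict_of_forall_mem measurableSet_Ioo hpos) hint
  have hf : IntegrableOn f (Ioi 0 ×ˢ Ioi 0) :=
    (integrableOn_comp_simplexPolar f).1 (hradial.congr_fun hpolar.symm hmeas)
  calc ∫ u in Ioi 0, ∫ v in Ioi 0, exp (-L u v)
      = ∫ w in Ioi 0 ×ˢ Ioi 0, f w := (setIntegral_prod f hf).symm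
    _ = ∫ z in Ioo 0 1 ×ˢ Ioi 0, z.2 * exp (-(L (1 - z.1) z.1 * z.2)) := by
        rw [← integral_comp_simplexPolar, setIntegral_congr_fun hmeas hpolar]
    _ = ∫ s in Ioo 0 1, ∫ r in Ioi 0, r * exp (-(L (1 - s) s * r)) := setIntegral_prod _ hradial
    _ = ∫ s in Ioo 0 1, (L (1 - s) s ^ 2)⁻¹ :=
        setIntegral_congr_fun measurableSet_Ioo fun s hs => integral_mul_exp_neg_mul_Ioi (hpos s hs)

theorem integral_exp_neg_log_mul_rpow_mul_rpow (ℓ : ℝ → ℝ → ℝ) (p q : ℝ) :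
    ∫ x in Ioo 0 1, ∫ y in Ioo 0 1, exp (-ℓ (-log x) (-log y)) * x ^ (p - 1) * y ^ (q - 1) =
      ∫ u in Ioi 0, ∫ v in Ioi 0, exp (-(ℓ u v + p * u + q * v)) := by
  have hsubst (g : ℝ → ℝ) : ∫ x in Ioo 0 1, g x = ∫ u in Ioi 0, exp (-u) * g (exp (-u)) := by
    simpa using (integral_comp_exp_neg_Ioi g 0).symm
  simp only [hsubst, ← integral_const_mul, log_exp, neg_neg, ← exp_mul, ← exp_add]
  congr! 5
  ring

/-- The rate of exponential decay in `r` of `exp (-ℓ (-log x) (-log y)) x ^ p y ^ q` along the curve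
`x = exp (-r (1 - s))`, `y = exp (-r s)`, for `ℓ` homogeneous of order one. It equals
`ℓ (1 - s) s + (1 - s) p + s q`; the definition keeps the contribution of `x ^ (p - 1) y ^ (q - 1)`
apart from the contribution `1` of the Jacobian factor `x y`. -/
def tailRate (ℓ : ℝ → ℝ → ℝ) (p q s : ℝ) : ℝ :=
  ℓ (1 - s) s + (1 - s) * (p - 1) + s * (q - 1) + 1

section TailRate

variable {ℓ : ℝ → ℝ → ℝ} {p q : ℝ}

theorem tailRate_pos (hnonneg : ∀ x y, 0 ≤ x → 0 ≤ y → 0 ≤ ℓ x y) (hp : 0 < p) (hq : 0 < q)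
    {s : ℝ} (hs : s ∈ Icc (0 : ℝ) 1) : 0 < tailRate ℓ p q s := by
  have hℓ : 0 ≤ ℓ (1 - s) s := hnonneg _ _ (sub_nonneg.2 hs.2) hs.1
  have hconv : 0 < (1 - s) * p + s * q :=
    convex_Ioi (0 : ℝ) hp hq (sub_nonneg.2 hs.2) hs.1 (sub_add_cancel 1 s)
  unfold tailRate
  linarith

theorem continuousOn_tailRate
    (hcont : ContinuousOn (fun z : ℝ × ℝ => ℓ z.1 z.2) {z | 0 ≤ z.1 ∧ 0 ≤ z.2}) :
    ContinuousOn (tailRate ℓ p q) (Icc 0 1) := by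
  have hℓ : ContinuousOn (fun s => ℓ (1 - s) s) (Icc 0 1) :=
    hcont.comp (f := fun s : ℝ => (1 - s, s)) (by fun_prop) fun s hs => ⟨sub_nonneg.2 hs.2, hs.1⟩
  exact ((hℓ.add (by fun_prop)).add (by fun_prop)).add (by fun_prop)

end TailRate

theorem stmt13_general (ℓ : ℝ → ℝ → ℝ) (p q : ℝ)
    (hhom : ∀ c, 0 < c → ∀ x y, 0 < x → 0 < y → ℓ (c * x) (c * y) = c * ℓ x y)
    (hpos : ∀ s ∈ Ioo (0 : ℝ) 1, 0 < tailRate ℓ p q s)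
    (hint : IntegrableOn (fun s => (tailRate ℓ p q s ^ 2)⁻¹) (Ioo 0 1)) :
    ∫ x in (0 : ℝ)..1, ∫ y in (0 : ℝ)..1,
        exp (-ℓ (-log x) (-log y)) * x ^ (p - 1) * y ^ (q - 1) =
      ∫ s in (0 : ℝ)..1, (tailRate ℓ p q s ^ 2)⁻¹ := by
  let L : ℝ → ℝ → ℝ := fun u v => ℓ u v + p * u + q * v
  have hL (s : ℝ) : tailRate ℓ p q s = L (1 - s) s := by
    simp only [L, tailRate]
    ring
  have hLhom (c) (hc : 0 < c) (u v) (hu : 0 < u) (hv : 0 < v) : L (c * u) (c * v) = c * L u v := by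
    simp only [L, hhom c hc u v hu hv]
    ring
  simp only [hL] at hpos hint ⊢
  simp only [intervalIntegral.integral_of_le zero_le_one, integral_Ioc_eq_integral_Ioo]
  rw [integral_exp_neg_log_mul_rpow_mul_rpow]
  exact integral_exp_neg_of_homogeneous hLhom hpos hint

/-- For a bivariate stable tail dependence function `ℓ₂`
(continuous, homogeneous of order one, `max ≤ ℓ₂ ≤ sum`) and `p, q > 0`,
`∫₀¹∫₀¹ exp(−ℓ₂(−ln x, −ln y)) x^{p−1} y^{q−1} dx dy
  = ∫₀¹ [ℓ₂(1−s, s) + (1−s)(p−1) + s(q−1) + 1]^{−2} ds`. -/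
theorem stmt13 (ℓ2 : ℝ → ℝ → ℝ)
    (hcont : ContinuousOn (fun q : ℝ × ℝ => ℓ2 q.1 q.2) {q | 0 ≤ q.1 ∧ 0 ≤ q.2})
    (hhom : ∀ c : ℝ, 0 < c → ∀ x y : ℝ, 0 ≤ x → 0 ≤ y →
      ℓ2 (c * x) (c * y) = c * ℓ2 x y)
    (hbounds : ∀ x y : ℝ, 0 ≤ x → 0 ≤ y →
      max x y ≤ ℓ2 x y ∧ ℓ2 x y ≤ x + y)
    (p q : ℝ) (hp : 0 < p) (hq : 0 < q) :
    ∫ x in (0:ℝ)..1, ∫ y in (0:ℝ)..1,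
        Real.exp (-ℓ2 (-Real.log x) (-Real.log y)) * x ^ (p - 1) * y ^ (q - 1)
      = ∫ s in (0:ℝ)..1,
          ((ℓ2 (1 - s) s + (1 - s) * (p - 1) + s * (q - 1) + 1) ^ 2)⁻¹ := by
  have hpos (s) (hs : s ∈ Icc (0 : ℝ) 1) : 0 < tailRate ℓ2 p q s :=
    tailRate_pos (fun x y hx hy => (le_max_of_le_left hx).trans (hbounds x y hx hy).1) hp hq hs
  have hint : IntegrableOn (fun s => (tailRate ℓ2 p q s ^ 2)⁻¹) (Icc 0 1) :=
    integrableOn_Icc_inv_sq (continuousOn_tailRate hcont) fun s hs => (hpos s hs).ne'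
  exact stmt13_general ℓ2 p q (fun c hc x y hx hy => hhom c hc x y hx.le hy.le)
    (fun s hs => hpos s (Ioo_subset_Icc_self hs)) (hint.mono_set Ioo_subset_Icc_self)
end
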